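/- Let p be a prime. Suppose L ⊆ Z^{p-1} is a translate set for a tiling of Z^{p-1} by the semi-cross V = {0, e_1, ..., e_{p-1}}, and suppose 0 ∉ L. Then the number of elements of L of type [1^k] (exactly k coordinates equal to 1, the rest 0) equals (C(p-1, k) - (-1)^k)/p, for each 1 ≤ k < p. -/

import Mathlib

/-- A tiling of `ℤ^n` by translates of `V` with translate set `L`:
every point has a unique representation `v + l` with `v ∈ V`, `l ∈ L`. -/
def IsTiling {n : ℕ} (V L : Set (Fin n → ℤ)) : Prop :=
  ∀ x : Fin n → ℤ, ∃! p : (Fin n → ℤ) × (Fin n → ℤ),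
    p.1 ∈ V ∧ p.2 ∈ L ∧ p.1 + p.2 = x

/-- The semi-cross `{0, e_1, …, e_m}` in `ℤ^m`. -/
def semicross (m : ℕ) : Set (Fin m → ℤ) :=
  insert 0 (Set.range fun i : Fin m => Pi.single i 1)

/-- The set of elements of `L` of type `[1^k]`: exactly `k` coordinates equal `1`,
all others equal `0`. -/
def typeOneK {m : ℕ} (L : Set (Fin m → ℤ)) (k : ℕ) : Set (Fin m → ℤ) :=
  {x ∈ L | ∃ s : Finset (Fin m), s.card = k ∧ ∀ i, x i = if i ∈ s then 1 else 0}

/-!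
Translations make the functions `f : G → R` a module over the group algebra `R[G]`. Write `T i` for
the translation by `v i`. When `f` is the indicator function of `L`, the tiling condition says that
`(∑ i, T i) • f` is the constant function `1`. Every `T i` fixes this constant, so a polynomial in
the `T i` multiplies it by its value at `(1, …, 1)`.

Let `p` be the number of tiles. For a prime `q`, the congruence `(∑ i, T i) ^ q ≡ ∑ i, T i ^ q`
modulo `q` shows that the number of `i` with `x + q • v i ∈ L` is congruent to `p ^ (q - 1)`.
If `q > p`, this number is therefore `1`, so the family `q • v` tiles again. If `q = p`, it is `0`
or `p`, so `L` has the periods `p • (v i - v j)`. By Dirichlet's theorem on primes in arithmetic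
progressions, `c • v` tiles for every `c` coprime to `p`.

Hence every power sum of the `T i` of degree `0 < j < p` sends `f` to `1`, and Newton's identities
give `p • e_k(T) • f = p.choose k`. For the semi-cross one of the `T i` is the identity, so the
value of `e_k(T) • f` at the origin is `N k + N (k - 1)`, where `N k` counts the elements of
type `[1^k]`. The formula follows from `N 0 = 0` and Pascal's rule.
-/

open Finset

section PowerSums

open MvPolynomial

variable {A M σ : Type*} [CommRing A] [AddCommGroup M] [Module A M] {a : σ → A} {f u : M}

lemma aeval_smul_eq_eval_one_smul (hu : ∀ i, a i • u = u) (P : MvPolynomial σ ℤ) :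
    aeval a P • u = eval 1 P • u := by
  induction P using MvPolynomial.induction_on with
  | C c => simp [Int.cast_smul_eq_zsmul]
  | add P Q hP hQ => simp only [map_add, add_smul, hP, hQ]
  | mul_X P i hP => simp [mul_smul, hu, hP]

variable [Fintype σ]

lemma sum_pow_char_smul (q : ℕ) [Fact q.Prime] [CharP A q] (hu : ∀ i, a i • u = u)
    (hf : (∑ i, a i) • f = u) : (∑ i, a i ^ q) • f = (Fintype.card σ ^ (q - 1)) • u := by
  have hq : q ≠ 0 := (Fact.out : q.Prime).ne_zero
  have h := aeval_smul_eq_eval_one_smul hu ((∑ i, X i) ^ (q - 1))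
  rw [← sum_pow_char q, ← pow_sub_one_mul hq, mul_smul, hf]
  simpa [← natCast_zsmul] using h

lemma card_smul_sum_powersetCard_prod_smul [IsAddTorsionFree M] (hu : ∀ i, a i • u = u)
    (hf : ∀ j, 0 < j → j < Fintype.card σ → (∑ i, a i ^ j) • f = u)
    {k : ℕ} (hk0 : 0 < k) (hk : k < Fintype.card σ) :
    Fintype.card σ • (∑ s ∈ powersetCard k univ, ∏ i ∈ s, a i) • f =
      (Fintype.card σ).choose k • u := by
  classical
  have hpsum (Q : MvPolynomial σ ℤ) {j : ℕ} (hj0 : 0 < j) (hj : j < Fintype.card σ) :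
      Fintype.card σ • aeval a (Q * psum σ ℤ j) • f = eval 1 (Q * psum σ ℤ j) • u := by
    have h : aeval a (psum σ ℤ j) • f = u := by simpa [psum] using hf j hj0 hj
    rw [map_mul, mul_smul, h, aeval_smul_eq_eval_one_smul hu]
    simp [psum, ← natCast_zsmul, smul_smul, mul_comm]
  have hnewton : Fintype.card σ • aeval a ((k : MvPolynomial σ ℤ) * esymm σ ℤ k) • f =
      eval 1 ((k : MvPolynomial σ ℤ) * esymm σ ℤ k) • u := by
    rw [mul_esymm_eq_sum, mul_sum]
    simp only [map_sum, sum_smul, smul_sum]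
    refine sum_congr rfl fun ij hij => ?_
    obtain ⟨hadd, hlt⟩ : ij.1 + ij.2 = k ∧ ij.1 < k := by simpa using hij
    rw [← mul_assoc]
    exact hpsum _ (by omega) (by omega)
  have haeval : aeval a (esymm σ ℤ k) = ∑ s ∈ powersetCard k univ, ∏ i ∈ s, a i := by simp [esymm]
  have heval : eval 1 (esymm σ ℤ k) = (Fintype.card σ).choose k := by simp [esymm]
  simp only [map_mul, map_natCast, haeval, heval, mul_smul, Nat.cast_smul_eq_nsmul] at hnewton
  rw [smul_comm] at hnewton
  exact nsmul_right_injective hk0.ne' hnewton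

end PowerSums

section Translation

open AddMonoidAlgebra

variable {R G σ : Type*} [CommRing R] [AddCommGroup G]

variable (R G) in
/-- The regular representation of `G` on the functions `G → R`: an element `g` sends `f` to
`fun x => f (x + g)`. -/
def translation : Multiplicative G →* Module.End R (G → R) where
  toFun g := LinearMap.funLeft R R (· + g.toAdd)
  map_one' := by ext; simp [LinearMap.funLeft_apply]
  map_mul' g h := by ext; simp [LinearMap.funLeft_apply, add_assoc]

/-- The functions `G → R` as a module over the group algebra, with `g` acting by translation. -/
noncomputable abbrev translationModule : Module R[G] (G → R) :=
  Module.compHom _ (AddMonoidAlgebra.lift R _ G (translation R G)).toRingHom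

attribute [local instance] translationModule

lemma single_one_smul_apply (g : G) (f : G → R) (x : G) :
    (single g (1 : R) • f) x = f (x + g) := by
  change AddMonoidAlgebra.lift R _ G (translation R G) (single g 1) f x = _
  rw [AddMonoidAlgebra.lift_single, one_smul]
  rfl

lemma sum_single_one_smul_apply {ι : Type*} (s : Finset ι) (v : ι → G) (f : G → R) (x : G) :
    ((∑ i ∈ s, single (v i) (1 : R)) • f) x = ∑ i ∈ s, f (x + v i) := by
  simp only [sum_smul, Finset.sum_apply, single_one_smul_apply]

variable [Fintype σ] {v : σ → G}

lemma sum_apply_add_prime_nsmul (q : ℕ) [Fact q.Prime] [CharP R q] {f : G → R}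
    (hf : ∀ x, ∑ i, f (x + v i) = 1) (x : G) :
    ∑ i, f (x + q • v i) = (Fintype.card σ : R) ^ (q - 1) := by
  have : CharP R[G] q :=
    charP_of_injective_ringHom (f := singleZeroRingHom) single_right_injective q
  have h := sum_pow_char_smul (a := fun i => single (v i) (1 : R)) (f := f) (u := 1) q
    (fun i => funext fun y => single_one_smul_apply ..)
    (funext fun y => by simpa [sum_single_one_smul_apply] using hf y)
  simpa [single_pow, sum_single_one_smul_apply] using congrFun h x

lemma card_mul_sum_powersetCard_apply_add_sum [IsAddTorsionFree R] {f : G → R}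
    (hf : ∀ j, 0 < j → j < Fintype.card σ → ∀ x, ∑ i, f (x + j • v i) = 1)
    {k : ℕ} (hk0 : 0 < k) (hk : k < Fintype.card σ) (x : G) :
    Fintype.card σ * ∑ s ∈ powersetCard k univ, f (x + ∑ i ∈ s, v i) =
      ((Fintype.card σ).choose k : R) := by
  have h := card_smul_sum_powersetCard_prod_smul (a := fun i => single (v i) (1 : R)) (f := f)
    (u := 1) (fun i => funext fun y => single_one_smul_apply ..)
    (fun j hj0 hj => funext fun y => by
      simpa [single_pow, sum_single_one_smul_apply] using hf j hj0 hj y) hk0 hk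
  simpa [AddMonoidAlgebra.prod_single, sum_single_one_smul_apply] using congrFun h x

end Translation

section TilingFamily

variable {G σ : Type*} [AddCommGroup G] {v : σ → G} {L : Set G}

/-- `L` is a translate set for the tile `{-v i | i : σ}`: every `x` is `-v i + l` for exactly one
`i : σ` and `l ∈ L`. With this sign the condition concerns translates of the indicator function of
`L` by the `v i` themselves. -/
def IsTilingFamily (v : σ → G) (L : Set G) : Prop :=
  ∀ x, ∃! i, x + v i ∈ L

namespace IsTilingFamily

lemma sum_indicator_one_add [Fintype σ] {R : Type*} [AddCommMonoidWithOne R]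
    (h : IsTilingFamily v L) (x : G) : ∑ i, L.indicator (1 : G → R) (x + v i) = 1 := by
  obtain ⟨i, hi, huniq⟩ := h x
  rw [sum_eq_single_of_mem i (mem_univ i) fun j _ hj =>
    Set.indicator_of_notMem (fun hmem => hj (huniq j hmem)) _, Set.indicator_of_mem hi,
    Pi.one_apply]

variable [Fintype σ]

lemma natCast_card_add_prime_nsmul_mem [DecidablePred (· ∈ L)] (h : IsTilingFamily v L) (q : ℕ)
    [Fact q.Prime] (x : G) :
    (#{i | x + q • v i ∈ L} : ZMod q) = (Fintype.card σ : ZMod q) ^ (q - 1) := by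
  rw [← sum_apply_add_prime_nsmul (f := L.indicator (1 : G → ZMod q)) q
    h.sum_indicator_one_add x]
  simp [Set.indicator_apply]

lemma prime_nsmul_of_card_lt (h : IsTilingFamily v L) {q : ℕ} (hq : q.Prime)
    (hlt : Fintype.card σ < q) : IsTilingFamily (fun i => q • v i) L := by
  classical
  have : Fact q.Prime := ⟨hq⟩
  intro x
  obtain ⟨i₀, -⟩ := (h x).exists
  have hcard : (Fintype.card σ : ZMod q) ≠ 0 := by
    rw [Ne, ZMod.natCast_eq_zero_iff]
    exact Nat.not_dvd_of_pos_of_lt (Fintype.card_pos_iff.2 ⟨i₀⟩) hlt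
  have hmod : #{i | x + q • v i ∈ L} ≡ 1 [MOD q] := by
    rw [← ZMod.natCast_eq_natCast_iff, h.natCast_card_add_prime_nsmul_mem,
      ZMod.pow_card_sub_one_eq_one hcard, Nat.cast_one]
  rw [Fintype.existsUnique_iff_card_one]
  exact hmod.eq_of_lt_of_lt ((card_le_univ _).trans_lt hlt) hq.one_lt

lemma add_card_nsmul_mem_iff (h : IsTilingFamily v L) (hp : (Fintype.card σ).Prime)
    (x : G) (i j : σ) :
    x + Fintype.card σ • v i ∈ L ↔ x + Fintype.card σ • v j ∈ L := by
  classical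
  have : Fact (Fintype.card σ).Prime := ⟨hp⟩
  set S : Finset σ := {i | x + Fintype.card σ • v i ∈ L} with hS
  have hdvd : Fintype.card σ ∣ #S := by
    rw [← ZMod.natCast_eq_zero_iff, h.natCast_card_add_prime_nsmul_mem, CharP.cast_eq_zero,
      zero_pow (Nat.sub_ne_zero_of_lt hp.one_lt)]
  have hS_trivial : S = ∅ ∨ S = univ := by
    rcases S.eq_empty_or_nonempty with hempty | hne
    · exact .inl hempty
    · exact .inr ((card_eq_iff_eq_univ S).1
        ((card_le_univ S).antisymm (Nat.le_of_dvd hne.card_pos hdvd)))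
  have hmem (i : σ) : i ∈ S ↔ x + Fintype.card σ • v i ∈ L := by simp [hS]
  rw [← hmem, ← hmem]
  rcases hS_trivial with hS | hS <;> simp [hS]

open scoped Pointwise in
lemma card_nsmul_sub_mem_stabilizer (h : IsTilingFamily v L)
    (hp : (Fintype.card σ).Prime) (i j : σ) :
    Fintype.card σ • (v i - v j) ∈ AddAction.stabilizer G L := by
  refine AddAction.mem_stabilizer_set.2 fun x => ?_
  have hx := h.add_card_nsmul_mem_iff hp (x - Fintype.card σ • v j) i j
  rwa [sub_add_cancel, sub_add_eq_add_sub, add_sub_assoc, ← smul_sub, add_comm] at hx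

lemma zsmul (h : IsTilingFamily v L) (hp : (Fintype.card σ).Prime) {c : ℤ}
    (hc : IsCoprime c (Fintype.card σ)) : IsTilingFamily (fun i => c • v i) L := by
  obtain ⟨q, hlt, hq, hmod⟩ :=
    Nat.forall_exists_prime_gt_and_zmodEq (Fintype.card σ) hp.ne_zero hc
  obtain ⟨t, ht⟩ := hmod.dvd
  obtain ⟨i₀⟩ := Fintype.card_pos_iff.1 hp.pos
  intro x
  have hperiod (i : σ) : x + c • v i ∈ L ↔ (x + (c - q) • v i₀) + q • v i ∈ L := by
    have ht_mem := zsmul_mem (h.card_nsmul_sub_mem_stabilizer hp i i₀) t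
    rw [← AddAction.mem_stabilizer_set.1 ht_mem (x + _ + _), vadd_eq_add]
    congr! 1
    rw [eq_add_of_sub_eq ht]
    module
  simpa only [hperiod] using h.prime_nsmul_of_card_lt hq hlt (x + (c - q) • v i₀)

lemma card_mul_card_powersetCard_sum_mem [DecidablePred (· ∈ L)] (h : IsTilingFamily v L)
    (hp : (Fintype.card σ).Prime) {k : ℕ} (hk0 : 0 < k) (hk : k < Fintype.card σ) (x : G) :
    Fintype.card σ * #{s ∈ powersetCard k univ | x + ∑ i ∈ s, v i ∈ L} =
      (Fintype.card σ).choose k := by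
  have hsmul (j : ℕ) (hj0 : 0 < j) (hj : j < Fintype.card σ) :
      IsTilingFamily (fun i => j • v i) L := by
    have hcoprime : IsCoprime (j : ℤ) (Fintype.card σ) :=
      Nat.isCoprime_iff_coprime.2 (Nat.coprime_of_lt_prime hj0.ne' hj hp).symm
    simpa only [natCast_zsmul] using h.zsmul hp hcoprime
  have hsum := card_mul_sum_powersetCard_apply_add_sum (f := L.indicator (1 : G → ℤ))
    (fun j hj0 hj => (hsmul j hj0 hj).sum_indicator_one_add) hk0 hk x
  simp only [Set.indicator_apply, Pi.one_apply, sum_boole] at hsum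
  exact_mod_cast hsum

end IsTilingFamily

end TilingFamily

lemma IsTiling.isTilingFamily_neg {n : ℕ} {σ : Type*} {w : σ → Fin n → ℤ} {L : Set (Fin n → ℤ)}
    (hw : w.Injective) (hT : IsTiling (Set.range w) L) : IsTilingFamily (fun i => -w i) L := by
  intro x
  obtain ⟨⟨_, l⟩, ⟨⟨i, rfl⟩, hl, rfl⟩, huniq⟩ := hT x
  refine ⟨i, by simpa using hl, fun j hj => hw ?_⟩
  exact congrArg Prod.fst (huniq (w j, _) ⟨⟨j, rfl⟩, hj, add_add_neg_cancel'_right _ _⟩)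

lemma sum_powersetCard_succ_option {α M : Type*} [Fintype α] [AddCommMonoid M] (k : ℕ)
    (F : Finset (Option α) → M) :
    ∑ s ∈ powersetCard (k + 1) univ, F s =
      ∑ s ∈ powersetCard (k + 1) univ, F (s.map .some) +
        ∑ s ∈ powersetCard k univ, F (insertNone s) := by
  classical
  rw [← sum_filter_not_add_sum_filter _ (none ∈ ·)]
  congr 1
  · refine sum_nbij' eraseNone (·.map .some) ?_ ?_ ?_ ?_ ?_ <;>
      simp +contextual [card_eraseNone_of_not_mem]
  · refine sum_nbij' eraseNone insertNone ?_ ?_ ?_ ?_ ?_ <;>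
      simp +contextual [card_eraseNone_of_mem]

section Semicross

variable {m : ℕ}

/-- The elements `0, e_1, …, e_m` of the semi-cross, as a family indexed by `Option (Fin m)`. -/
def semicrossCell (m : ℕ) (o : Option (Fin m)) : Fin m → ℤ :=
  o.elim 0 fun i => Pi.single i 1

lemma range_semicrossCell (m : ℕ) : Set.range (semicrossCell m) = semicross m := by
  ext x
  simp [semicrossCell, semicross, Option.exists, eq_comm]

lemma semicrossCell_injective (m : ℕ) : (semicrossCell m).Injective := by
  rw [Option.injective_iff]
  refine ⟨fun i j hij => by simpa [semicrossCell, Pi.single_apply] using congrFun hij i, ?_⟩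
  simp [semicrossCell]

lemma IsTiling.isTilingFamily_semicrossCell {L : Set (Fin m → ℤ)} (hm : (m + 1).Prime)
    (hT : IsTiling (semicross m) L) : IsTilingFamily (semicrossCell m) L := by
  rw [← range_semicrossCell] at hT
  have h := (hT.isTilingFamily_neg (semicrossCell_injective m)).zsmul (c := -1) (by simpa using hm)
    isCoprime_one_left.neg_left
  simpa using h

lemma ncard_typeOneK (L : Set (Fin m → ℤ)) [DecidablePred (· ∈ L)] (k : ℕ) :
    (typeOneK L k).ncard =
      #{s ∈ powersetCard k univ | ∑ i ∈ s, (Pi.single i 1 : Fin m → ℤ) ∈ L} := by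
  set w : Finset (Fin m) → Fin m → ℤ := fun s => ∑ i ∈ s, Pi.single i 1 with hw
  have hw_apply (s : Finset (Fin m)) (i : Fin m) : w s i = if i ∈ s then 1 else 0 := by
    simp [hw, Finset.sum_apply]
  have hw_injective : w.Injective := fun s t hst => by
    ext i
    have := congrFun hst i
    rw [hw_apply, hw_apply] at this
    grind
  rw [← Set.ncard_coe_finset, ← Set.ncard_image_of_injective _ hw_injective]
  congr 1
  ext x
  simp only [typeOneK, ← hw_apply, ← funext_iff, Set.mem_ofPred_eq, Set.mem_image, coe_filter,
    mem_powersetCard_univ]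
  grind

lemma IsTiling.succ_mul_ncard_typeOneK_succ_add {L : Set (Fin m → ℤ)} (hm : (m + 1).Prime)
    (hT : IsTiling (semicross m) L) {k : ℕ} (hk : k < m) :
    (m + 1) * ((typeOneK L (k + 1)).ncard + (typeOneK L k).ncard) = (m + 1).choose (k + 1) := by
  classical
  have hcard : Fintype.card (Option (Fin m)) = m + 1 := by simp
  have h := (hT.isTilingFamily_semicrossCell hm).card_mul_card_powersetCard_sum_mem
    (by rwa [hcard]) k.succ_pos (by omega) 0
  rw [hcard, card_filter, sum_powersetCard_succ_option, ← card_filter, ← card_filter] at h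
  simpa [ncard_typeOneK, semicrossCell, sum_insertNone] using h

lemma IsTiling.succ_mul_ncard_typeOneK {L : Set (Fin m → ℤ)} (hm : (m + 1).Prime)
    (hT : IsTiling (semicross m) L) {k : ℕ} (hk : k ≤ m) :
    ((m + 1 : ℕ) : ℤ) * (typeOneK L k).ncard =
      m.choose k + (-1) ^ k * ((m + 1 : ℕ) * (typeOneK L 0).ncard - 1) := by
  induction k with
  | zero => simp
  | succ k ih =>
    have hadd := hT.succ_mul_ncard_typeOneK_succ_add hm (Nat.lt_of_succ_le hk)
    rw [Nat.choose_succ_succ, mul_add] at hadd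
    have ih := ih (Nat.le_of_succ_le hk)
    zify at hadd
    push_cast at ih ⊢
    linear_combination hadd - ih

lemma ncard_typeOneK_zero_of_notMem {L : Set (Fin m → ℤ)} (h0 : 0 ∉ L) :
    (typeOneK L 0).ncard = 0 := by
  classical
  simp [ncard_typeOneK, h0]

end Semicross

theorem stmt_14 (p : ℕ) (hp : p.Prime) (L : Set (Fin (p - 1) → ℤ))
    (hT : IsTiling (semicross (p - 1)) L) (h0 : (0 : Fin (p - 1) → ℤ) ∉ L)
    (k : ℕ) (hk1 : 1 ≤ k) (hk : k < p) :
    (p : ℤ) * ((typeOneK L k).ncard : ℤ) =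
      (Nat.choose (p - 1) k : ℤ) - (-1) ^ k := by
  obtain ⟨m, rfl⟩ := Nat.exists_eq_add_one.2 hp.pos
  have h := IsTiling.succ_mul_ncard_typeOneK (m := m) hp hT (Nat.le_of_lt_succ hk)
  rw [ncard_typeOneK_zero_of_notMem h0] at h
  simpa [sub_eq_add_neg] using h
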